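/- arXiv:2303.18008 — 6 statements merged into one kernel-verified Lean document; each statement's English description precedes it below -/
import Mathlib

section
/- For the transformed trapdoor channel with the two-node Q-graph, test distribution T, and value function h: for each mixed state s̃ ∈ {(0,1),(1,0)}, each node q ∈ {1,2}, and every input x̃ ∈ {0,1}, one has D(W(·|x̃,s̃) ‖ T(·|q)) + Σ_{ỹ∈{0,1}} W(ỹ|x̃,s̃)·h(f̃(s̃,x̃,ỹ), φ(q,ỹ)) = log₂(3/2). Consequently, since h(s̃,q) = 0 at these states, the Bellman equation log₂(3/2) + h(s̃,q) = max_{x̃∈{0,1}} [ D(W(·|x̃,s̃) ‖ T(·|q)) + Σ_{ỹ} W(ỹ|x̃,s̃)·h(f̃(s̃,x̃,ỹ), φ(q,ỹ)) ] holds at all four such MDP states. -/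
/-!
At a mixed state the output is uniform, so the relative entropy to either test distribution is
`½ log₂(3/4) + ½ log₂(3/2) = log₂(3/2) - ½` (`D_mixed`). After output `y` the next MDP state is
`((1 ⊕ y, x), y)`, where `h` equals `1` exactly when `x = 1 ⊕ y`; so for every input `x` exactly one
of the two equiprobable outputs earns value `1`, and the expected value `½` (`value_mixed`) cancels
the `-½`.
-/

open Real

noncomputable section

namespace TrapdoorDelayed

/-- Output kernel of the transformed trapdoor channel (trapdoor channel with
feedback delayed by two time instances): `W x s y` is the probability of
output `y` given current input `x` and state `s = (s₀, x')`.  It does not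
depend on the current input: if `s₀ = x'` the output is `s₀` with probability
one; otherwise the output is `0` or `1` with probability `1/2` each. -/
def W (_x : Bool) (s : Bool × Bool) (y : Bool) : ℝ :=
  if s.1 = s.2 then (if y = s.1 then 1 else 0) else 1 / 2

/-- State update `f̃((s₀,x'), x̃, ỹ) = (s₀ ⊕ x' ⊕ ỹ, x̃)`. -/
def ftil (s : Bool × Bool) (x y : Bool) : Bool × Bool :=
  (Bool.xor (Bool.xor s.1 s.2) y, x)

/-- Two-node Q-graph node update `φ(q, ỹ) = ỹ + 1`: the node records the last
output (`false` = node 1, `true` = node 2). -/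
def phi (_q y : Bool) : Bool := y

/-- Graph-based test distribution: `T q y = T(ỹ = y | q)`, with
`T(0|1) = 2/3`, `T(1|1) = 1/3`, `T(0|2) = 1/3`, `T(1|2) = 2/3`. -/
def T (q y : Bool) : ℝ := if q = y then 2 / 3 else 1 / 3

/-- Value function: `h((0,0), node 2) = h((1,1), node 1) = 1`, else `0`. -/
def h (s : Bool × Bool) (q : Bool) : ℝ :=
  if (s = (false, false) ∧ q = true) ∨ (s = (true, true) ∧ q = false) then 1 else 0

/-- Binary relative entropy in bits, `D(P‖Q) = Σ_y P(y)·log₂(P(y)/Q(y))`; the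
convention `0·log 0 = 0` holds automatically since `Real.logb 2 0 = 0`. -/
def D (P Q : Bool → ℝ) : ℝ := ∑ y : Bool, P y * logb 2 (P y / Q y)

/-- Right-hand side of the Bellman equation for action `x` at MDP state `(s,q)`:
`D(W(·|x,s) ‖ T(·|q)) + Σ_ỹ W(ỹ|x,s)·h(f̃(s,x,ỹ), φ(q,ỹ))`. -/
def rhs (s : Bool × Bool) (q : Bool) (x : Bool) : ℝ :=
  D (W x s) (T q) + ∑ y : Bool, W x s y * h (ftil s x y) (phi q y)

/-- The output at a mixed state is uniform, and swapping the node only swaps the two terms of the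
relative entropy. -/
lemma D_mixed {s : Bool × Bool} (hs : s.1 ≠ s.2) (q x : Bool) :
    D (W x s) (T q) = logb 2 (3 / 2) - 1 / 2 := by
  have h34 : logb 2 (3 / 4) = logb 2 (3 / 2) - 1 := by
    rw [show (3 / 4 : ℝ) = 3 / 2 / 2 by norm_num, logb_div (by norm_num) (by norm_num),
      logb_self_eq_one (by norm_num)]
  have e1 : (1 / 2 : ℝ) / (2 / 3) = 3 / 4 := by norm_num
  have e2 : (1 / 2 : ℝ) / (1 / 3) = 3 / 2 := by norm_num
  cases q <;>
    simp only [D, W, T, Fintype.sum_bool, if_neg hs, reduceCtorEq, if_true, if_false, e1, e2,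
      h34] <;> ring

lemma value_mixed {s : Bool × Bool} (hs : s.1 ≠ s.2) (q x : Bool) :
    ∑ y : Bool, W x s y * h (ftil s x y) (phi q y) = 1 / 2 := by
  have hx : Bool.xor s.1 s.2 = true := by simpa using hs
  cases x <;> simp [W, h, ftil, phi, hs, hx]

/-- at each mixed state `s̃ ∈ {(0,1),(1,0)}` and each node `q`,
every action gives value `log₂(3/2)`; since `h(s̃,q) = 0` there, the Bellman
equation holds at all four such MDP states. -/
theorem bellman_at_mixed_states :
    (∀ s ∈ ({(false, true), (true, false)} : Set (Bool × Bool)), ∀ q x : Bool,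
      rhs s q x = logb 2 (3 / 2)) ∧
    (∀ s ∈ ({(false, true), (true, false)} : Set (Bool × Bool)), ∀ q : Bool,
      h s q = 0) ∧
    (∀ s ∈ ({(false, true), (true, false)} : Set (Bool × Bool)), ∀ q : Bool,
      logb 2 (3 / 2) + h s q = max (rhs s q false) (rhs s q true)) := by
  have hne : ∀ s ∈ ({(false, true), (true, false)} : Set (Bool × Bool)), s.1 ≠ s.2 := by
    rintro s (rfl | rfl) <;> simp
  have hrhs : ∀ s ∈ ({(false, true), (true, false)} : Set (Bool × Bool)), ∀ q x : Bool,
      rhs s q x = logb 2 (3 / 2) := by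
    intro s hs q x
    rw [rhs, D_mixed (hne s hs), value_mixed (hne s hs), sub_add_cancel]
  have hzero : ∀ s ∈ ({(false, true), (true, false)} : Set (Bool × Bool)), ∀ q : Bool,
      h s q = 0 := by
    rintro s (rfl | rfl) q <;> simp [h]
  refine ⟨hrhs, hzero, fun s hs q => ?_⟩
  rw [hrhs s hs, hrhs s hs, hzero s hs, max_self, add_zero]

end TrapdoorDelayed
end
end

section
/- For the transformed trapdoor channel with the two-node Q-graph, test distribution T, and value function h, the pair (ρ, h) with ρ = log₂(3/2) solves the Bellman equation of the duality-based MDP: for every state (s̃,q) ∈ S̃ × {1,2}, log₂(3/2) + h(s̃,q) = max_{x̃∈{0,1}} [ D(W(·|x̃,s̃) ‖ T(·|q)) + Σ_{ỹ∈{0,1}} W(ỹ|x̃,s̃)·h(f̃(s̃,x̃,ỹ), φ(q,ỹ)) ]. (This is the verification underlying the converse bound C₂^{fb} ≤ log₂(3/2) for the trapdoor channel with two-instance delayed feedback.) -/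
/-! At every state the two actions attain the same value, so the maximum is trivial.
If `s₀ = x'` the output is `s₀`, the next value of `h` vanishes, and the divergence is `log₂ (3/2)`
or `log₂ 3 = log₂ (3/2) + 1` according to whether the node `q` agrees with `s₀`; the extra bit is
`h s q`. If `s₀ ≠ x'` the divergence is `(log₂ (3/4) + log₂ (3/2)) / 2 = log₂ (3/2) - 1/2`, while
exactly one of the two equiprobable outputs leads to a state with `h = 1`, restoring the `1/2`. -/

open Real

noncomputable section

namespace TrapdoorDelayed

lemma logb_three : logb 2 3 = logb 2 (3 / 2) + 1 := by
  rw [logb_div (by norm_num) (by norm_num), logb_self_eq_one (by norm_num)]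
  ring

lemma logb_three_quarters : logb 2 (3 / 4) = logb 2 (3 / 2) - 1 := by
  rw [show (3 / 4 : ℝ) = (3 / 2) / 2 by norm_num, logb_div (by norm_num) (by norm_num),
    logb_self_eq_one (by norm_num)]

/-- Both actions attain the Bellman value. -/
lemma rhs_eq (s : Bool × Bool) (q x : Bool) : rhs s q x = logb 2 (3 / 2) + h s q := by
  have e1 : (1 / 2 : ℝ) / (2 / 3) = 3 / 4 := by norm_num
  have e2 : (1 / 2 : ℝ) / (1 / 3) = 3 / 2 := by norm_num
  have e3 : (1 : ℝ) / (2 / 3) = 3 / 2 := by norm_num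
  have e4 : (1 : ℝ) / (1 / 3) = 3 := by norm_num
  obtain ⟨a, b⟩ := s
  cases a <;> cases b <;> cases q <;> cases x <;>
    simp only [rhs, D, W, T, h, ftil, phi, Fintype.sum_bool, Bool.xor_true, Bool.xor_false,
      Bool.not_true, Bool.not_false, Prod.mk.injEq, reduceCtorEq, and_true, and_false,
      or_false, or_true, and_self, or_self, if_true, if_false, e1, e2, e3, e4, logb_three,
      logb_three_quarters] <;>
    ring

/-- the pair `(ρ, h)` with `ρ = log₂(3/2)` solves the Bellman
equation of the duality-based MDP at every state `(s̃, q)`. -/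
theorem bellman_solution :
    ∀ (s : Bool × Bool) (q : Bool),
      logb 2 (3 / 2) + h s q = max (rhs s q false) (rhs s q true) := by
  intro s q
  rw [rhs_eq, rhs_eq, max_self]

end TrapdoorDelayed
end
end

section
/- For every p ∈ (0,1) and every (a,b,c,d) ∈ (0,1)⁴, the following identity holds for the transformed input-constrained BSC(p): ρ* + h((0,0),1) = D([p̄,p] ‖ [a,ā]) + p̄·h((0,0),1) + p·h((0,0),2), where ρ* = log₂( p^p·p̄^{p̄}·a^{p³−3p²+3p−1}·(b̄c̄d)^{p³−p²} / ( (ābc)^{p³−2p²+p}·d̄^{p³} ) ), h((0,0),1) = log₂( c̄^p·d·d̄^p·c^{1−2p} / (ā^{2p}·b^p·a^{2−3p}) · (ābcd̄/(ab̄c̄d))^{p²} ), and h((0,0),2) = log₂( (d/b)·(bd̄/(b̄d))^p ). -/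
/-!
All quantities lie in `(0,1)`, so every factor inside the logarithms is positive and each of
`rhoStar`, `h001`, `h002` and `Dbin` expands into a linear combination of the logarithms of
`p`, `a`, `b`, `c`, `d` and their complements, with coefficients polynomial in `p`
(`rhoStar_expand`, `h001_expand`, `h002_expand`). The identity then holds because the
coefficients on the two sides agree: after moving the `h` terms to the left, those of `b`, `c`,
`d` and their complements cancel, leaving `-(1 - p)` for `log a` and `-p` for `log (1 - a)`.
-/

open Real

noncomputable section

namespace BSCDelayed

/-!
The transformed (1,∞)-RLL input-constrained BSC(p): the binary symmetric
channel with crossover probability `p`, inputs forbidden to contain two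
consecutive ones, with feedback delayed by two time instances, viewed as a
unifilar FSC with instantaneous feedback.  The state is `s̃ = (x'', x')`, the
two previous inputs; output `ỹ` depends only on `x'`.  Throughout, `ū = 1 - u`
and real powers `u ^ v` are `Real.rpow`.
-/

/-- `PY p s y` = probability that the output is `y` at state `s = (x'',x')`:
`ỹ = x'` with probability `1 - p`. -/
def PY (p : ℝ) (s : Bool × Bool) (y : Bool) : ℝ := if s.2 = y then 1 - p else p

/-- State update `f̃((x'',x'), x̃, ỹ) = (x', x̃)`. -/
def fB (s : Bool × Bool) (x : Bool) (_y : Bool) : Bool × Bool := (s.2, x)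

/-- Four-node Q-graph node update (nodes 1,2,3,4 are indices 0,1,2,3):
`φ(q,0) = 1` for `q ∈ {1,3}`, `φ(q,0) = 3` for `q ∈ {2,4}`,
`φ(q,1) = 2` for `q ∈ {1,3}`, `φ(q,1) = 4` for `q ∈ {2,4}`. -/
def phi4 (q : Fin 4) (y : Bool) : Fin 4 :=
  if q.val % 2 = 0 then (if y then 1 else 0) else (if y then 3 else 2)

/-- Graph-based test distribution: `T(0|q) = a, b, c, d` for nodes `q = 1,2,3,4`. -/
def TB (a b c d : ℝ) : Fin 4 → ℝ := ![a, b, c, d]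

/-- Binary relative entropy `D([u,1−u]‖[v,1−v]) = u·log₂(u/v) + ū·log₂(ū/v̄)`. -/
def Dbin (u v : ℝ) : ℝ := u * logb 2 (u / v) + (1 - u) * logb 2 ((1 - u) / (1 - v))

/-- The recurring ratio `ābcd̄/(ab̄c̄d)`. -/
def ratio (a b c d : ℝ) : ℝ := ((1 - a) * b * c * (1 - d)) / (a * (1 - b) * (1 - c) * d)

/-- `ρ* = log₂( p^p·p̄^p̄·a^{p³−3p²+3p−1}·(b̄c̄d)^{p³−p²} / ((ābc)^{p³−2p²+p}·d̄^{p³}) )`. -/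
def rhoStar (p a b c d : ℝ) : ℝ :=
  logb 2 ((p ^ p * (1 - p) ^ (1 - p) * a ^ (p^3 - 3*p^2 + 3*p - 1) *
      ((1 - b) * (1 - c) * d) ^ (p^3 - p^2)) /
    (((1 - a) * b * c) ^ (p^3 - 2*p^2 + p) * (1 - d) ^ (p^3)))

/-- `h((0,0),1) = h((1,0),1)`. -/
def h001 (p a b c d : ℝ) : ℝ :=
  logb 2 (((1 - c) ^ p * d * (1 - d) ^ p * c ^ (1 - 2*p)) /
      ((1 - a) ^ (2*p) * b ^ p * a ^ (2 - 3*p)) * ratio a b c d ^ (p^2))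

/-- `h((0,0),2) = h((1,0),2)`. -/
def h002 (p a b c d : ℝ) : ℝ :=
  logb 2 ((d / b) * ((b * (1 - d)) / ((1 - b) * d)) ^ p)

/-- `h((0,0),3) = h((1,0),3)`. -/
def h003 (p a b c d : ℝ) : ℝ :=
  logb 2 ((a ^ (2*p - 1) * d * (1 - d) ^ p) / ((1 - a) * b * c) ^ p *
    ratio a b c d ^ (p^2))

/-- `h((0,1),1)`. -/
def h011 (p a b c d : ℝ) : ℝ :=
  logb 2 ((a ^ (6*p^2 - 6*p + 1) * (1 - b) ^ (2*p^2 - p) * (1 - c) ^ (2*p^2) *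
      d ^ (2*p^2 - p + 1) * (1 - d) ^ p) /
    ((1 - a) ^ (4*p^2 - 2*p + 1) * b ^ (4*p^2 - 3*p + 1) * c ^ (4*p^2 - 2*p)) *
    ratio a b c d ^ (2*p^3))

/-- `h((0,1),2)`. -/
def h012 (p a b c d : ℝ) : ℝ :=
  logb 2 ((a ^ (5*p^2 - 4*p + 1) * ((1 - a) * c * d) ^ p *
      ((1 - b) * (1 - c) * d * (1 - d)) ^ (p^2)) /
    ((1 - b) ^ (1 - p) * ((1 - a) * b * c) ^ (3*p^2)) *
    ratio a b c d ^ (2*p^3))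

/-- `h((0,1),3)`. -/
def h013 (p a b c d : ℝ) : ℝ :=
  logb 2 ((a ^ (6*p^2 - 5*p + 1) * (1 - b) ^ (2*p^2 - p) * (1 - c) ^ (2*p^2 + p - 1) *
      d ^ (2*p^2 - p + 1) * (1 - d) ^ p) /
    ((1 - a) ^ (4*p^2 - p) * b ^ (4*p^2 - 3*p + 1) * c ^ (4*p^2 - p)) *
    ratio a b c d ^ (2*p^3))

/-- `h((0,1),4)`. -/
def h014 (p a b c d : ℝ) : ℝ :=
  logb 2 ((a ^ (5*p^2 - 4*p + 1) * ((1 - b) * (1 - c) * d * (1 - d)) ^ (p^2)) /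
    (((1 - a) * b * c) ^ (3*p^2 - p) * (1 - d) ^ (1 - p)) *
    ratio a b c d ^ (2*p^3))

/-- The value function `h(s̃, q)` (the pair `s̃ = (1,1)` never occurs and is
assigned the value 0). -/
def hB (p a b c d : ℝ) (s : Bool × Bool) (q : Fin 4) : ℝ :=
  match s with
  | (false, false) => ![h001 p a b c d, h002 p a b c d, h003 p a b c d, 0] q
  | (true, false) => ![h001 p a b c d, h002 p a b c d, h003 p a b c d, 0] q
  | (false, true) => ![h011 p a b c d, h012 p a b c d, h013 p a b c d, h014 p a b c d] q
  | (true, true) => 0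

/-- Right-hand side of the Bellman equation for action `x` at MDP state `(s,q)`:
`D(P_Ỹ(·|s) ‖ T(·|q)) + Σ_ỹ P_Ỹ(ỹ|s)·h(f̃(s,x,ỹ), φ(q,ỹ))`. -/
def rhsB (p a b c d : ℝ) (s : Bool × Bool) (q : Fin 4) (x : Bool) : ℝ :=
  Dbin (PY p s false) (TB a b c d q) +
    ∑ y : Bool, PY p s y * hB p a b c d (fB s x y) (phi4 q y)

/-- First constraint of Theorem 8 (Eq. (15) in the paper). -/
def cons1 (p a b c d : ℝ) : Prop :=
  1 ≤ (a ^ (4*p^3 - 12*p^2 + 11*p - 3) * ((1 - b) * d) ^ (4*p^3 - 6*p^2 + 2*p) *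
      (1 - c) ^ (4*p^3 - 4*p^2 + p)) /
    (((1 - a) * c) ^ (4*p^3 - 8*p^2 + 5*p - 1) * b ^ (4*p^3 - 10*p^2 + 6*p - 1) *
      (1 - d) ^ (4*p^3 - 2*p^2))

/-- Second constraint of Theorem 8. -/
def cons2 (p a b c d : ℝ) : Prop :=
  1 ≤ (a ^ (4*p^3 - 10*p^2 + 8*p - 2) * ((1 - b) * d) ^ (4*p^3 - 4*p^2 + p) *
      (1 - c) ^ (4*p^3 - 2*p^2 - 2*p + 1)) /
    (((1 - a) * c) ^ (4*p^3 - 6*p^2 + 2*p) * b ^ (4*p^3 - 8*p^2 + 5*p - 1) *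
      (1 - d) ^ (4*p^3 - p))

theorem rhoStar_expand {p a b c d : ℝ} (hp : 0 < p) (hp' : 0 < 1 - p)
    (ha : 0 < a) (ha' : 0 < 1 - a) (hb : 0 < b) (hb' : 0 < 1 - b)
    (hc : 0 < c) (hc' : 0 < 1 - c) (hd : 0 < d) (hd' : 0 < 1 - d) :
    rhoStar p a b c d =
      p * logb 2 p + (1 - p) * logb 2 (1 - p) + (p^3 - 3*p^2 + 3*p - 1) * logb 2 a +
        (p^3 - p^2) * (logb 2 (1 - b) + logb 2 (1 - c) + logb 2 d) -
        ((p^3 - 2*p^2 + p) * (logb 2 (1 - a) + logb 2 b + logb 2 c) +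
          p^3 * logb 2 (1 - d)) := by
  unfold rhoStar
  rw [logb_div (by positivity) (by positivity), logb_mul (by positivity) (by positivity),
    logb_mul (by positivity) (by positivity), logb_mul (by positivity) (by positivity),
    logb_mul (x := (_ : ℝ) ^ (_ : ℝ)) (by positivity) (by positivity),
    logb_rpow_eq_mul_logb_of_pos hp, logb_rpow_eq_mul_logb_of_pos hp',
    logb_rpow_eq_mul_logb_of_pos ha, logb_rpow_eq_mul_logb_of_pos (by positivity),
    logb_rpow_eq_mul_logb_of_pos (by positivity), logb_rpow_eq_mul_logb_of_pos hd',
    logb_mul (by positivity) hd.ne', logb_mul hb'.ne' hc'.ne',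
    logb_mul (by positivity) hc.ne', logb_mul ha'.ne' hb.ne']

theorem logb_ratio {a b c d : ℝ}
    (ha : 0 < a) (ha' : 0 < 1 - a) (hb : 0 < b) (hb' : 0 < 1 - b)
    (hc : 0 < c) (hc' : 0 < 1 - c) (hd : 0 < d) (hd' : 0 < 1 - d) :
    logb 2 (ratio a b c d) =
      logb 2 (1 - a) + logb 2 b + logb 2 c + logb 2 (1 - d) -
        (logb 2 a + logb 2 (1 - b) + logb 2 (1 - c) + logb 2 d) := by
  unfold ratio
  rw [logb_div (by positivity) (by positivity),
    logb_mul (by positivity) hd'.ne', logb_mul (by positivity) hc.ne', logb_mul ha'.ne' hb.ne',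
    logb_mul (by positivity) hd.ne', logb_mul (by positivity) hc'.ne', logb_mul ha.ne' hb'.ne']

theorem h001_expand (p : ℝ) {a b c d : ℝ}
    (ha : 0 < a) (ha' : 0 < 1 - a) (hb : 0 < b) (hb' : 0 < 1 - b)
    (hc : 0 < c) (hc' : 0 < 1 - c) (hd : 0 < d) (hd' : 0 < 1 - d) :
    h001 p a b c d =
      p * logb 2 (1 - c) + logb 2 d + p * logb 2 (1 - d) + (1 - 2*p) * logb 2 c -
        (2*p * logb 2 (1 - a) + p * logb 2 b + (2 - 3*p) * logb 2 a) +
        p^2 * (logb 2 (1 - a) + logb 2 b + logb 2 c + logb 2 (1 - d) -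
          (logb 2 a + logb 2 (1 - b) + logb 2 (1 - c) + logb 2 d)) := by
  have hr : 0 < ratio a b c d := by unfold ratio; positivity
  unfold h001
  rw [logb_mul (by positivity) (by positivity), logb_div (by positivity) (by positivity),
    logb_rpow_eq_mul_logb_of_pos hr, logb_ratio ha ha' hb hb' hc hc' hd hd',
    logb_mul (y := c ^ _) (by positivity) (by positivity),
    logb_mul (y := (1 - d) ^ _) (by positivity) (by positivity),
    logb_mul (y := d) (by positivity) (by positivity),
    logb_mul (y := a ^ _) (by positivity) (by positivity),
    logb_mul (y := b ^ _) (by positivity) (by positivity),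
    logb_rpow_eq_mul_logb_of_pos hc', logb_rpow_eq_mul_logb_of_pos hd',
    logb_rpow_eq_mul_logb_of_pos hc, logb_rpow_eq_mul_logb_of_pos ha',
    logb_rpow_eq_mul_logb_of_pos hb, logb_rpow_eq_mul_logb_of_pos ha]

theorem h002_expand (p a c : ℝ) {b d : ℝ}
    (hb : 0 < b) (hb' : 0 < 1 - b) (hd : 0 < d) (hd' : 0 < 1 - d) :
    h002 p a b c d =
      logb 2 d - logb 2 b +
        p * (logb 2 b + logb 2 (1 - d) - (logb 2 (1 - b) + logb 2 d)) := by
  unfold h002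
  rw [logb_mul (by positivity) (by positivity), logb_rpow_eq_mul_logb_of_pos (by positivity),
    logb_div hd.ne' hb.ne', logb_div (by positivity) (by positivity),
    logb_mul hb.ne' hd'.ne', logb_mul hb'.ne' hd.ne']

/-- for every `p ∈ (0,1)` and `(a,b,c,d) ∈ (0,1)⁴`,
`ρ* + h((0,0),1) = D([p̄,p]‖[a,ā]) + p̄·h((0,0),1) + p·h((0,0),2)`. -/
theorem bellman_identity_state00_node1 :
    ∀ p a b c d : ℝ, p ∈ Set.Ioo (0:ℝ) 1 → a ∈ Set.Ioo (0:ℝ) 1 →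
      b ∈ Set.Ioo (0:ℝ) 1 → c ∈ Set.Ioo (0:ℝ) 1 → d ∈ Set.Ioo (0:ℝ) 1 →
      rhoStar p a b c d + h001 p a b c d =
        Dbin (1 - p) a + (1 - p) * h001 p a b c d + p * h002 p a b c d := by
  intro p a b c d ⟨hp, hp1⟩ ⟨ha, ha1⟩ ⟨hb, hb1⟩ ⟨hc, hc1⟩ ⟨hd, hd1⟩
  have hp' : 0 < 1 - p := by linarith
  have ha' : 0 < 1 - a := by linarith
  have hb' : 0 < 1 - b := by linarith
  have hc' : 0 < 1 - c := by linarith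
  have hd' : 0 < 1 - d := by linarith
  rw [rhoStar_expand hp hp' ha ha' hb hb' hc hc' hd hd',
    h001_expand p ha ha' hb hb' hc hc' hd hd', h002_expand p a c hb hb' hd hd',
    Dbin, sub_sub_cancel, logb_div hp'.ne' ha.ne', logb_div hp.ne' ha'.ne']
  ring

end BSCDelayed
end
end

section
/- Let p ∈ (0,1) and (a,b,c,d) ∈ (0,1)⁴ satisfy the two constraints: 1 ≤ a^{4p³−12p²+11p−3}·(b̄d)^{4p³−6p²+2p}·c̄^{4p³−4p²+p} / ( (āc)^{4p³−8p²+5p−1}·b^{4p³−10p²+6p−1}·d̄^{4p³−2p²} ) and 1 ≤ a^{4p³−10p²+8p−2}·(b̄d)^{4p³−4p²+p}·c̄^{4p³−2p²−2p+1} / ( (āc)^{4p³−6p²+2p}·b^{4p³−8p²+5p−1}·d̄^{4p³−p} ). Then, at the MDP state ((0,0),1) of the transformed input-constrained BSC(p), the action x̃ = 0 attains the maximum in the Bellman equation; equivalently, p̄·h((0,0),1) + p·h((0,0),2) ≥ p̄·h((0,1),1) + p·h((0,1),2), where h((0,0),1) = log₂( c̄^p·d·d̄^p·c^{1−2p}/(ā^{2p}·b^p·a^{2−3p})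 · (ābcd̄/(ab̄c̄d))^{p²} ), h((0,0),2) = log₂( (d/b)·(bd̄/(b̄d))^p ), h((0,1),1) = log₂( a^{6p²−6p+1}·b̄^{2p²−p}·c̄^{2p²}·d^{2p²−p+1}·d̄^p / (ā^{4p²−2p+1}·b^{4p²−3p+1}·c^{4p²−2p}) · (ābcd̄/(ab̄c̄d))^{2p³} ), and h((0,1),2) = log₂( a^{5p²−4p+1}·(ācd)^p·(b̄c̄dd̄)^{p²} / (b̄^{1−p}·(ābc)^{3p²}) · (ābcd̄/(ab̄c̄d))^{2p³} ). -/
/-!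
Taking `log₂` turns every quantity into a linear combination of the eight numbers
`log₂ a`, `log₂ ā`, …, `log₂ d`, `log₂ d̄`, with coefficients polynomial in `p`. Comparing
coefficients, the difference of the two continuation values equals the `log₂` of the right-hand
side of the first constraint, which is nonnegative because that right-hand side is at least `1`.
-/

open Real

noncomputable section

namespace BSCDelayed

/-- under the two constraints, the action `x̃ = 0` attains the
maximum in the Bellman equation at MDP state `((0,0),1)`; equivalently,
`p̄·h((0,0),1) + p·h((0,0),2) ≥ p̄·h((0,1),1) + p·h((0,1),2)`. -/
theorem action_zero_dominates :
    ∀ p a b c d : ℝ, p ∈ Set.Ioo (0:ℝ) 1 → a ∈ Set.Ioo (0:ℝ) 1 →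
      b ∈ Set.Ioo (0:ℝ) 1 → c ∈ Set.Ioo (0:ℝ) 1 → d ∈ Set.Ioo (0:ℝ) 1 →
      cons1 p a b c d → cons2 p a b c d →
      (1 - p) * h011 p a b c d + p * h012 p a b c d ≤
        (1 - p) * h001 p a b c d + p * h002 p a b c d := by
  intro p a b c d _ ⟨ha, ha1⟩ ⟨hb, hb1⟩ ⟨hc, hc1⟩ ⟨hd, hd1⟩ h1 _
  have ha' : 0 < 1 - a := sub_pos.2 ha1
  have hb' : 0 < 1 - b := sub_pos.2 hb1
  have hc' : 0 < 1 - c := sub_pos.2 hc1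
  have hd' : 0 < 1 - d := sub_pos.2 hd1
  have h := Real.logb_nonneg one_lt_two h1
  simp only [h011, h012, h001, h002, ratio]
  clear h1 ha1 hb1 hc1 hd1
  -- The complements `1 - a`, …, `1 - d` are treated as independent positive variables from here on.
  generalize 1 - a = a' at *
  generalize 1 - b = b' at *
  generalize 1 - c = c' at *
  generalize 1 - d = d' at *
  simp (disch := positivity) only [Real.logb_mul, Real.logb_div,
    Real.logb_rpow_eq_mul_logb_of_pos] at h ⊢
  linear_combination h

end BSCDelayed
end
end

section
/- Let p ∈ (0,1) and (a,b,c,d) ∈ (0,1)⁴ satisfy the two constraints: 1 ≤ a^{4p³−12p²+11p−3}·(b̄d)^{4p³−6p²+2p}·c̄^{4p³−4p²+p} / ( (āc)^{4p³−8p²+5p−1}·b^{4p³−10p²+6p−1}·d̄^{4p³−2p²} ) and 1 ≤ a^{4p³−10p²+8p−2}·(b̄d)^{4p³−4p²+p}·c̄^{4p³−2p²−2p+1} / ( (āc)^{4p³−6p²+2p}·b^{4p³−8p²+5p−1}·d̄^{4p³−p} ). Then, for the transformed input-constrained BSC(p) with the four-node Q-graph, test distribution T(0|q) = a,b,c,d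 for q = 1,2,3,4, and the value function h specified below, the Bellman equation holds: for every s̃ ∈ {(0,0),(0,1),(1,0)} and every q ∈ {1,2,3,4}, ρ* + h(s̃,q) = max over admissible x̃ (only x̃ = 0 when s̃ = (0,1); x̃ ∈ {0,1} otherwise) of D(P_{Ỹ}(·|s̃) ‖ T(·|q)) + Σ_{ỹ∈{0,1}} P_{Ỹ}(ỹ|s̃)·h(f̃(s̃,x̃,ỹ), φ(q,ỹ)), where ρ* = log₂( p^p·p̄^{p̄}·a^{p³−3p²+3p−1}·(b̄c̄d)^{p³−p²} / ( (ābc)^{p³−2p²+p}·d̄^{p³} ) ). -/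
/-!
Since `a, b, c, d, p` lie in `(0,1)`, every quantity in the Bellman equation is a linear form in
the logarithms of `a, b, c, d, p` and of their complements, with coefficients polynomial in `p`;
the lemmas `rhoStar_eq` and `h001_eq`, ..., `h014_eq` record these forms. With them,
`ρ* + h(s, q)` equals the right-hand side for the action `x̃ = 0` identically, at all states and
nodes, without using the constraints. This settles `s = (0,1)`, where `x̃ = 0` is forced.

At the other two states it remains to see that `x̃ = 0` is optimal. The right-hand side for
`x̃ = 0` minus that for `x̃ = 1` is exactly the logarithm of the quantity bounded below by 1 in
`cons1` (nodes 1 and 3) or in `cons2` (nodes 2 and 4), hence nonnegative.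
-/

open Real

noncomputable section

namespace BSCDelayed

/-- The base-2 logarithm of `ratio a b c d`, expanded as a linear form in the logarithms of
`a, b, c, d` and their complements. -/
def ratioLog (a b c d : ℝ) : ℝ :=
  logb 2 (1 - a) + logb 2 b + logb 2 c + logb 2 (1 - d)
    - (logb 2 a + logb 2 (1 - b) + logb 2 (1 - c) + logb 2 d)

theorem rhoStar_eq {p a b c d : ℝ} (hp0 : 0 < p) (hp1 : 0 < 1 - p) (ha0 : 0 < a) (ha1 : 0 < 1 - a)
    (hb0 : 0 < b) (hb1 : 0 < 1 - b) (hc0 : 0 < c) (hc1 : 0 < 1 - c)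
    (hd0 : 0 < d) (hd1 : 0 < 1 - d) :
    rhoStar p a b c d =
      p * logb 2 p + (1 - p) * logb 2 (1 - p)
      + (p^3 - 3*p^2 + 3*p - 1) * logb 2 a
      + (p^3 - p^2) * (logb 2 (1 - b) + logb 2 (1 - c) + logb 2 d)
      - ((p^3 - 2*p^2 + p) * (logb 2 (1 - a) + logb 2 b + logb 2 c)
        + p^3 * logb 2 (1 - d)) := by
  simp (disch := positivity) only [rhoStar, logb_mul, logb_div,
    logb_rpow_eq_mul_logb_of_pos]

theorem h001_eq {p a b c d : ℝ} (ha0 : 0 < a) (ha1 : 0 < 1 - a)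
    (hb0 : 0 < b) (hb1 : 0 < 1 - b) (hc0 : 0 < c) (hc1 : 0 < 1 - c)
    (hd0 : 0 < d) (hd1 : 0 < 1 - d) :
    h001 p a b c d =
      p * logb 2 (1 - c) + logb 2 d + p * logb 2 (1 - d) + (1 - 2*p) * logb 2 c
      - (2*p * logb 2 (1 - a) + p * logb 2 b + (2 - 3*p) * logb 2 a)
      + p^2 * ratioLog a b c d := by
  simp (disch := positivity) only [h001, ratio, ratioLog, logb_mul, logb_div,
    logb_rpow_eq_mul_logb_of_pos]

theorem h002_eq {p b d : ℝ} (a c : ℝ) (hb0 : 0 < b) (hb1 : 0 < 1 - b)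
    (hd0 : 0 < d) (hd1 : 0 < 1 - d) :
    h002 p a b c d =
      logb 2 d - logb 2 b
      + p * (logb 2 b + logb 2 (1 - d) - (logb 2 (1 - b) + logb 2 d)) := by
  simp (disch := positivity) only [h002, logb_mul, logb_div,
    logb_rpow_eq_mul_logb_of_pos]

theorem h003_eq {p a b c d : ℝ} (ha0 : 0 < a) (ha1 : 0 < 1 - a)
    (hb0 : 0 < b) (hb1 : 0 < 1 - b) (hc0 : 0 < c) (hc1 : 0 < 1 - c)
    (hd0 : 0 < d) (hd1 : 0 < 1 - d) :
    h003 p a b c d =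
      (2*p - 1) * logb 2 a + logb 2 d + p * logb 2 (1 - d)
      - p * (logb 2 (1 - a) + logb 2 b + logb 2 c) + p^2 * ratioLog a b c d := by
  simp (disch := positivity) only [h003, ratio, ratioLog, logb_mul, logb_div,
    logb_rpow_eq_mul_logb_of_pos]

theorem h011_eq {p a b c d : ℝ} (ha0 : 0 < a) (ha1 : 0 < 1 - a)
    (hb0 : 0 < b) (hb1 : 0 < 1 - b) (hc0 : 0 < c) (hc1 : 0 < 1 - c)
    (hd0 : 0 < d) (hd1 : 0 < 1 - d) :
    h011 p a b c d =
      (6*p^2 - 6*p + 1) * logb 2 a + (2*p^2 - p) * logb 2 (1 - b)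
      + 2*p^2 * logb 2 (1 - c) + (2*p^2 - p + 1) * logb 2 d + p * logb 2 (1 - d)
      - ((4*p^2 - 2*p + 1) * logb 2 (1 - a) + (4*p^2 - 3*p + 1) * logb 2 b
        + (4*p^2 - 2*p) * logb 2 c)
      + 2*p^3 * ratioLog a b c d := by
  simp (disch := positivity) only [h011, ratio, ratioLog, logb_mul, logb_div,
    logb_rpow_eq_mul_logb_of_pos]

theorem h012_eq {p a b c d : ℝ} (ha0 : 0 < a) (ha1 : 0 < 1 - a)
    (hb0 : 0 < b) (hb1 : 0 < 1 - b) (hc0 : 0 < c) (hc1 : 0 < 1 - c)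
    (hd0 : 0 < d) (hd1 : 0 < 1 - d) :
    h012 p a b c d =
      (5*p^2 - 4*p + 1) * logb 2 a + p * (logb 2 (1 - a) + logb 2 c + logb 2 d)
      + p^2 * (logb 2 (1 - b) + logb 2 (1 - c) + logb 2 d + logb 2 (1 - d))
      - ((1 - p) * logb 2 (1 - b) + 3*p^2 * (logb 2 (1 - a) + logb 2 b + logb 2 c))
      + 2*p^3 * ratioLog a b c d := by
  simp (disch := positivity) only [h012, ratio, ratioLog, logb_mul, logb_div,
    logb_rpow_eq_mul_logb_of_pos]

theorem h013_eq {p a b c d : ℝ} (ha0 : 0 < a) (ha1 : 0 < 1 - a)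
    (hb0 : 0 < b) (hb1 : 0 < 1 - b) (hc0 : 0 < c) (hc1 : 0 < 1 - c)
    (hd0 : 0 < d) (hd1 : 0 < 1 - d) :
    h013 p a b c d =
      (6*p^2 - 5*p + 1) * logb 2 a + (2*p^2 - p) * logb 2 (1 - b)
      + (2*p^2 + p - 1) * logb 2 (1 - c) + (2*p^2 - p + 1) * logb 2 d + p * logb 2 (1 - d)
      - ((4*p^2 - p) * logb 2 (1 - a) + (4*p^2 - 3*p + 1) * logb 2 b + (4*p^2 - p) * logb 2 c)
      + 2*p^3 * ratioLog a b c d := by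
  simp (disch := positivity) only [h013, ratio, ratioLog, logb_mul, logb_div,
    logb_rpow_eq_mul_logb_of_pos]

theorem h014_eq {p a b c d : ℝ} (ha0 : 0 < a) (ha1 : 0 < 1 - a)
    (hb0 : 0 < b) (hb1 : 0 < 1 - b) (hc0 : 0 < c) (hc1 : 0 < 1 - c)
    (hd0 : 0 < d) (hd1 : 0 < 1 - d) :
    h014 p a b c d =
      (5*p^2 - 4*p + 1) * logb 2 a
      + p^2 * (logb 2 (1 - b) + logb 2 (1 - c) + logb 2 d + logb 2 (1 - d))
      - ((3*p^2 - p) * (logb 2 (1 - a) + logb 2 b + logb 2 c)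
        + (1 - p) * logb 2 (1 - d))
      + 2*p^3 * ratioLog a b c d := by
  simp (disch := positivity) only [h014, ratio, ratioLog, logb_mul, logb_div,
    logb_rpow_eq_mul_logb_of_pos]

/-- The logarithm of the first constraint, which is the loss incurred at nodes 1 and 3 by playing
`x̃ = 1` instead of `x̃ = 0` from a state whose last input is 0. -/
theorem cons1.log_nonneg {p a b c d : ℝ} (ha0 : 0 < a) (ha1 : 0 < 1 - a)
    (hb0 : 0 < b) (hb1 : 0 < 1 - b) (hc0 : 0 < c) (hc1 : 0 < 1 - c)
    (hd0 : 0 < d) (hd1 : 0 < 1 - d)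
    (h : cons1 p a b c d) :
    0 ≤ (4*p^3 - 12*p^2 + 11*p - 3) * logb 2 a
      + (4*p^3 - 6*p^2 + 2*p) * (logb 2 (1 - b) + logb 2 d)
      + (4*p^3 - 4*p^2 + p) * logb 2 (1 - c)
      - ((4*p^3 - 8*p^2 + 5*p - 1) * (logb 2 (1 - a) + logb 2 c)
        + (4*p^3 - 10*p^2 + 6*p - 1) * logb 2 b + (4*p^3 - 2*p^2) * logb 2 (1 - d)) := by
  have hlog := logb_nonneg one_lt_two h
  simpa (disch := positivity) only [logb_mul, logb_div, logb_rpow_eq_mul_logb_of_pos] using hlog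

/-- The logarithm of the second constraint, which is the loss incurred at nodes 2 and 4 by playing
`x̃ = 1` instead of `x̃ = 0` from a state whose last input is 0. -/
theorem cons2.log_nonneg {p a b c d : ℝ} (ha0 : 0 < a) (ha1 : 0 < 1 - a)
    (hb0 : 0 < b) (hb1 : 0 < 1 - b) (hc0 : 0 < c) (hc1 : 0 < 1 - c)
    (hd0 : 0 < d) (hd1 : 0 < 1 - d)
    (h : cons2 p a b c d) :
    0 ≤ (4*p^3 - 10*p^2 + 8*p - 2) * logb 2 a
      + (4*p^3 - 4*p^2 + p) * (logb 2 (1 - b) + logb 2 d)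
      + (4*p^3 - 2*p^2 - 2*p + 1) * logb 2 (1 - c)
      - ((4*p^3 - 6*p^2 + 2*p) * (logb 2 (1 - a) + logb 2 c)
        + (4*p^3 - 8*p^2 + 5*p - 1) * logb 2 b + (4*p^3 - p) * logb 2 (1 - d)) := by
  have hlog := logb_nonneg one_lt_two h
  simpa (disch := positivity) only [logb_mul, logb_div, logb_rpow_eq_mul_logb_of_pos] using hlog

/-- under the two constraints, the pair `(ρ*, h)` solves the
Bellman equation of the transformed input-constrained BSC(p) with the
four-node Q-graph and test distribution `T(0|q) = a,b,c,d`: for every state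
`s̃ ∈ {(0,0),(0,1),(1,0)}` and node `q`, `ρ* + h(s̃,q)` equals the maximum over
admissible actions (only `x̃ = 0` when `s̃ = (0,1)`) of the Bellman right-hand
side. -/
theorem bellman_solution_BSC :
    ∀ p a b c d : ℝ, p ∈ Set.Ioo (0:ℝ) 1 → a ∈ Set.Ioo (0:ℝ) 1 →
      b ∈ Set.Ioo (0:ℝ) 1 → c ∈ Set.Ioo (0:ℝ) 1 → d ∈ Set.Ioo (0:ℝ) 1 →
      cons1 p a b c d → cons2 p a b c d →
      ∀ s ∈ ({(false, false), (false, true), (true, false)} : Set (Bool × Bool)),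
        ∀ q : Fin 4,
          rhoStar p a b c d + hB p a b c d s q =
            if s = (false, true) then rhsB p a b c d s q false
            else max (rhsB p a b c d s q false) (rhsB p a b c d s q true) := by
  rintro p a b c d ⟨hp0, hp1⟩ ⟨ha0, ha1⟩ ⟨hb0, hb1⟩ ⟨hc0, hc1⟩ ⟨hd0, hd1⟩ h1 h2 s hs q
  rw [← sub_pos] at hp1 ha1 hb1 hc1 hd1
  have e1 := h1.log_nonneg ha0 ha1 hb0 hb1 hc0 hc1 hd0 hd1
  have e2 := h2.log_nonneg ha0 ha1 hb0 hb1 hc0 hc1 hd0 hd1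
  -- The relative entropy and all the values occurring below, as linear forms in the logarithms.
  have hD (u v : ℝ) (hu0 : 0 < u) (hu1 : 0 < 1 - u) (hv0 : 0 < v) (hv1 : 0 < 1 - v) :
      Dbin u v = u * (logb 2 u - logb 2 v) + (1 - u) * (logb 2 (1 - u) - logb 2 (1 - v)) := by
    rw [Dbin, logb_div hu0.ne' hv0.ne', logb_div hu1.ne' hv1.ne']
  have hp1' : 0 < 1 - (1 - p) := by linarith
  have hDa := hD (1 - p) a hp1 hp1' ha0 ha1
  have hDb := hD (1 - p) b hp1 hp1' hb0 hb1
  have hDc := hD (1 - p) c hp1 hp1' hc0 hc1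
  have hDd := hD (1 - p) d hp1 hp1' hd0 hd1
  have hDa' := hD p a hp0 hp1 ha0 ha1
  have hDb' := hD p b hp0 hp1 hb0 hb1
  have hDc' := hD p c hp0 hp1 hc0 hc1
  have hDd' := hD p d hp0 hp1 hd0 hd1
  rw [sub_sub_cancel] at hDa hDb hDc hDd
  have hρ := rhoStar_eq hp0 hp1 ha0 ha1 hb0 hb1 hc0 hc1 hd0 hd1
  have h₀1 := h001_eq (p := p) ha0 ha1 hb0 hb1 hc0 hc1 hd0 hd1
  have h₀2 := h002_eq (p := p) a c hb0 hb1 hd0 hd1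
  have h₀3 := h003_eq (p := p) ha0 ha1 hb0 hb1 hc0 hc1 hd0 hd1
  have h₁1 := h011_eq (p := p) ha0 ha1 hb0 hb1 hc0 hc1 hd0 hd1
  have h₁2 := h012_eq (p := p) ha0 ha1 hb0 hb1 hc0 hc1 hd0 hd1
  have h₁3 := h013_eq (p := p) ha0 ha1 hb0 hb1 hc0 hc1 hd0 hd1
  have h₁4 := h014_eq (p := p) ha0 ha1 hb0 hb1 hc0 hc1 hd0 hd1
  have key0 (q : Fin 4) :
      rhoStar p a b c d + hB p a b c d (false, false) q = rhsB p a b c d (false, false) q false := by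
    fin_cases q <;>
      simp [rhsB, hB, PY, fB, phi4, TB, hDa, hDb, hDc, hDd, hρ, h₀1, h₀2, h₀3, ratioLog] <;> ring
  have key1 (q : Fin 4) :
      rhoStar p a b c d + hB p a b c d (false, true) q = rhsB p a b c d (false, true) q false := by
    fin_cases q <;>
      simp [rhsB, hB, PY, fB, phi4, TB, hDa', hDb', hDc', hDd', hρ, h₀1, h₀2, h₀3,
        h₁1, h₁2, h₁3, h₁4, ratioLog] <;> ring
  -- The gap between the two actions is the logarithm of the first constraint at `q ∈ {1, 3}` and
  -- that of the second one at `q ∈ {2, 4}`.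
  have opt (q : Fin 4) :
      rhsB p a b c d (false, false) q true ≤ rhsB p a b c d (false, false) q false := by
    fin_cases q <;>
      simp [rhsB, hB, PY, fB, phi4, TB, h₀1, h₀2, h₀3, h₁1, h₁2, h₁3, h₁4, ratioLog] <;> linarith
  -- The right-hand side depends on the state only through its second component, and `h` does not
  -- distinguish `(0,0)` from `(1,0)`, so the third case is definitionally the first.
  rcases hs with rfl | rfl | rfl
  · rw [if_neg (by decide), max_eq_left (opt q), key0 q]
  · rw [if_pos rfl, key1 q]
  · rw [if_neg (by decide)]
    exact (key0 q).trans (max_eq_left (opt q)).symm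

end BSCDelayed
end
end

section
/- Let X, Y, S be finite nonempty types, let n ≥ d ≥ 2 be integers, let μ₀ be a probability mass function on S, let W be a channel kernel assigning to each (x,σ) ∈ X × S a probability mass function W(·,·|x,σ) on S × Y, and for each t ∈ {1,…,n} let e_t be an encoder kernel assigning to each history (x^{t−1}, y^{t−d}) a probability mass function e_t(·|x^{t−1},y^{t−d}) on X (with y^{t−d} the empty history when t ≤ d). Let μ be the probability mass function on Xⁿ × Yⁿ × S^{n+1} given by μ(x^n, y^n, s_0^n) = μ₀(s_0)·Π_{t=1}^{n} e_t(x_t|x^{t−1},y^{t−d})·W(s_t, y_t|x_t, s_{t−1}). Then for every t with d ≤ t ≤ n: (i) for all (x^t, y^{t−d+1}, s^{t−d+1}) such that the event {X^t = x^t, Y^{t−d+1} = y^{t−d+1}, S^{t−d} = s^{t−d}} has positive μ-probability, the conditional probability μ(S_{t−d+1} = s_{t−d+1} | X^t = x^t, Y^{t−d+1} = y^{t−d+1}, S^{t−d} = s^{t−d}) equals W(s_{t−d+1}, y_{t−d+1} | x_{t−d+1}, s_{t−d}) / Σ_{σ'∈S} W(σ', y_{t−d+1} | x_{t−d+1}, s_{t−d});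 and (ii) for all (x^t, y^{t−d}, s^{t−d}) such that the event {X^t = x^t, Y^{t−d} = y^{t−d}, S^{t−d} = s^{t−d}} has positive μ-probability, μ(Y_{t−d+1} = y | X^t = x^t, Y^{t−d} = y^{t−d}, S^{t−d} = s^{t−d}) = Σ_{σ'∈S} W(σ', y | x_{t−d+1}, s_{t−d}) for every y ∈ Y. Consequently, the transformed process with state S̃_{t−1} = (S_{t−d}, X_{t−d+1}^{t−1}), output Ỹ_t = Y_{t−d+1}, and input X̃_t = X_t satisfies the finite-state-channel Markov property: its new state and output at time t depend on the past only through (S̃_{t−1}, X̃_t), via a time-invariant kernel. -/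
open Finset

/-!
Everything follows from one closed formula for the mass of the cylinder that fixes the first `t`
inputs, the first `a` outputs and the states up to time `a`: whenever `t - d ≤ a ≤ t ≤ n`,
`P(X^t = x^t, Y^a = y^a, S_0^a = s_0^a) = μ₀(s_0) · ∏_{i<t} e_i · ∏_{i<a} W_i`
(`mass_eq`). It is proved by integrating out the last free coordinate. For `a = t < n` this is the
input at time `t + 1`, whose encoder kernel sums to one. For `a < t` it is the pair (output, state)
at time `a + 1`, whose channel kernel sums to one. The second step is legitimate exactly because of
the feedback delay: the first `t` encoder kernels only see outputs up to time `t - d ≤ a`, so they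
are constant in the output that is being summed.

With `k = t - d`, the four probabilities in the theorem are sums of instances of this formula
with `a = k` or `a = k + 1`, and they share the factor
`c = μ₀(s_0) · ∏_{i<t} e_i · ∏_{i<k} W_i`, which cancels in each ratio.
-/

section CylinderMass

variable {X Y S : Type*} {n : ℕ}

/-- The product of the encoder kernels at the first `t` times along a trajectory. -/
noncomputable def encProd (d : ℕ)
    (e : (t : Fin n) → (Fin t.val → X) → (Fin (t.val + 1 - d) → Y) → X → ℝ)
    (t : ℕ) (xs : Fin n → X) (ys : Fin n → Y) : ℝ :=
  ∏ i : Fin n, if i.val < t then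
    e i (fun j => xs ⟨j.val, j.isLt.trans i.isLt⟩)
      (fun j => ys ⟨j.val, by have h1 := j.isLt; have h2 := i.isLt; omega⟩) (xs i) else 1

/-- The product of the channel kernels at the first `a` times along a trajectory. -/
noncomputable def chanProd (W : S → Y → X → S → ℝ)
    (a : ℕ) (xs : Fin n → X) (ys : Fin n → Y) (ss : Fin (n + 1) → S) : ℝ :=
  ∏ i : Fin n, if i.val < a then W (ss i.succ) (ys i) (xs i) (ss i.castSucc) else 1

lemma prod_ite_lt_succ (f : Fin n → ℝ) (a : ℕ) (ha : a < n) :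
    (∏ i : Fin n, if i.val < a + 1 then f i else 1) =
      (∏ i : Fin n, if i.val < a then f i else 1) * f ⟨a, ha⟩ := by
  have h : ∀ i : Fin n, (if i.val < a + 1 then f i else 1) =
      (if i.val < a then f i else 1) * (if i = ⟨a, ha⟩ then f i else 1) := by
    intro i
    rcases lt_trichotomy i.val a with h | h | h
    · have h2 : i ≠ ⟨a, ha⟩ := fun h' => by rw [h'] at h; simp at h
      simp [h, h2, Nat.lt_succ_of_lt h]
    · have h2 : i = ⟨a, ha⟩ := Fin.ext h
      subst h2
      simp
    · have h2 : i ≠ ⟨a, ha⟩ := fun h' => by rw [h'] at h; simp at h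
      have h3 : ¬ i.val < a := by omega
      have h4 : ¬ i.val < a + 1 := by omega
      simp [h2, h3, h4]
  simp_rw [h, Finset.prod_mul_distrib]
  simp

/-- By the feedback delay, the first `t` encoder kernels only depend on the first `t` inputs and
the first `t - d` outputs. -/
lemma encProd_congr (d : ℕ)
    (e : (t : Fin n) → (Fin t.val → X) → (Fin (t.val + 1 - d) → Y) → X → ℝ)
    (t : ℕ) (xs xs' : Fin n → X) (ys ys' : Fin n → Y)
    (hx : ∀ i : Fin n, i.val < t → xs i = xs' i)
    (hy : ∀ i : Fin n, i.val < t - d → ys i = ys' i) :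
    encProd d e t xs ys = encProd d e t xs' ys' := by
  unfold encProd
  refine Finset.prod_congr rfl fun i _ => ?_
  split_ifs with h
  · congr 1
    · funext j
      exact hx _ (by have := j.isLt; simp only; omega)
    · funext j
      exact hy _ (by have := j.isLt; simp only; omega)
    · exact hx _ h
  · rfl

lemma chanProd_congr (W : S → Y → X → S → ℝ)
    (a : ℕ) (xs xs' : Fin n → X) (ys ys' : Fin n → Y) (ss ss' : Fin (n + 1) → S)
    (hx : ∀ i : Fin n, i.val < a → xs i = xs' i)
    (hy : ∀ i : Fin n, i.val < a → ys i = ys' i)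
    (hs : ∀ i : Fin (n + 1), i.val ≤ a → ss i = ss' i) :
    chanProd W a xs ys ss = chanProd W a xs' ys' ss' := by
  unfold chanProd
  refine Finset.prod_congr rfl fun i _ => ?_
  split_ifs with h
  · rw [hx i h, hy i h, hs i.succ (by simpa using h), hs i.castSucc (by simpa using h.le)]
  · rfl

lemma update_of_val_ne {A : Type*} {N : ℕ} (g : Fin N → A) (a : ℕ) (ha : a < N) (v : A)
    (i : Fin N) (hi : i.val ≠ a) : Function.update g ⟨a, ha⟩ v i = g i :=
  Function.update_of_ne (fun h => hi (by rw [h])) _ _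

lemma agree_succ_iff {A : Type*} {N : ℕ} (f g : Fin N → A) (a : ℕ) (ha : a < N) (v : A) :
    (∀ i : Fin N, i.val < a + 1 → f i = Function.update g ⟨a, ha⟩ v i) ↔
      (∀ i : Fin N, i.val < a → f i = g i) ∧ f ⟨a, ha⟩ = v := by
  constructor
  · intro h
    refine ⟨fun i hi => ?_, ?_⟩
    · rw [h i (by omega), update_of_val_ne _ _ _ _ _ (by omega)]
    · rw [h ⟨a, ha⟩ (by simp)]
      simp
  · rintro ⟨h1, h2⟩ i hi
    by_cases hia : i.val = a
    · have h3 : i = ⟨a, ha⟩ := Fin.ext hia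
      subst h3
      simpa using h2
    · rw [update_of_val_ne _ _ _ _ _ hia]
      exact h1 i (by omega)

lemma agree_le_succ_iff {A : Type*} {N : ℕ} (f g : Fin N → A) (a : ℕ) (ha : a + 1 < N) (v : A) :
    (∀ i : Fin N, i.val ≤ a + 1 → f i = Function.update g ⟨a + 1, ha⟩ v i) ↔
      (∀ i : Fin N, i.val ≤ a → f i = g i) ∧ f ⟨a + 1, ha⟩ = v := by
  simpa only [Nat.lt_succ_iff] using agree_succ_iff f g (a + 1) ha v

/-- Extending the trajectory by one output `y` and one state `σ` multiplies the channel product by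
the single kernel value `W σ y x_a s_a`. -/
lemma chanProd_succ_update (W : S → Y → X → S → ℝ)
    (a : ℕ) (ha : a < n) (xs : Fin n → X) (ys : Fin n → Y) (ss : Fin (n + 1) → S)
    (y : Y) (σ : S) :
    chanProd W (a + 1) xs (Function.update ys ⟨a, ha⟩ y)
        (Function.update ss ⟨a + 1, Nat.succ_lt_succ ha⟩ σ) =
      chanProd W a xs ys ss * W σ y (xs ⟨a, ha⟩) (ss ⟨a, ha.trans (Nat.lt_succ_self n)⟩) := by
  have h1 := chanProd_congr W a xs xs (Function.update ys ⟨a, ha⟩ y) ys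
    (Function.update ss ⟨a + 1, Nat.succ_lt_succ ha⟩ σ) ss (fun _ _ => rfl)
    (fun i hi => update_of_val_ne _ _ _ _ _ (by omega))
    (fun i hi => update_of_val_ne _ _ _ _ _ (by omega))
  rw [← h1]
  unfold chanProd
  rw [prod_ite_lt_succ _ a ha]
  congr 1
  have h2 : (Fin.succ ⟨a, ha⟩ : Fin (n + 1)) = ⟨a + 1, Nat.succ_lt_succ ha⟩ := rfl
  have h3 : (Fin.castSucc ⟨a, ha⟩ : Fin (n + 1)) = ⟨a, ha.trans (Nat.lt_succ_self n)⟩ := rfl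
  rw [h2, h3, Function.update_self, Function.update_self,
    update_of_val_ne _ _ _ _ _ (by simp)]

lemma encProd_succ_update (d : ℕ)
    (e : (t : Fin n) → (Fin t.val → X) → (Fin (t.val + 1 - d) → Y) → X → ℝ)
    (t : ℕ) (ht : t < n) (xs : Fin n → X) (ys : Fin n → Y) (x : X) :
    encProd d e (t + 1) (Function.update xs ⟨t, ht⟩ x) ys =
      encProd d e t xs ys * e ⟨t, ht⟩ (fun j => xs ⟨j.val, j.isLt.trans ht⟩)
        (fun j => ys ⟨j.val, by have h1 := j.isLt; simp only at h1; omega⟩) x := by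
  have h1 := encProd_congr d e t (Function.update xs ⟨t, ht⟩ x) xs ys ys
    (fun i hi => update_of_val_ne _ _ _ _ _ (by omega)) (fun _ _ => rfl)
  rw [← h1]
  unfold encProd
  rw [prod_ite_lt_succ _ t ht]
  congr 1
  rw [Function.update_self]
  congr 1
  funext j
  exact update_of_val_ne _ _ _ _ _ (by have := j.isLt; simp only at this ⊢; omega)

variable [Fintype X] [Fintype Y] [Fintype S] [DecidableEq X] [DecidableEq Y] [DecidableEq S]

/-- The `μ`-mass of the cylinder of trajectories agreeing with `(xs, ys, ss)` in the first `t`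
inputs, the first `a` outputs, and the states at times `0, …, b`. -/
noncomputable def cylMass (μ : (Fin n → X) → (Fin n → Y) → (Fin (n + 1) → S) → ℝ)
    (t a b : ℕ) (xs : Fin n → X) (ys : Fin n → Y) (ss : Fin (n + 1) → S) : ℝ :=
  ∑ xs' : Fin n → X, ∑ ys' : Fin n → Y, ∑ ss' : Fin (n + 1) → S,
    (if (∀ i : Fin n, i.val < t → xs' i = xs i) ∧
        (∀ i : Fin n, i.val < a → ys' i = ys i) ∧
        (∀ i : Fin (n + 1), i.val ≤ b → ss' i = ss i)
      then μ xs' ys' ss' else 0)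

lemma ite_eq_sum_ite {A : Type*} [Fintype A] [DecidableEq A] (P : Prop) [Decidable P]
    (Q : A → Prop) [DecidablePred Q] (w : A) (r : ℝ) (h : ∀ v, Q v ↔ P ∧ w = v) :
    (if P then r else 0) = ∑ v : A, if Q v then r else 0 := by
  by_cases hP : P
  · have hQ : ∀ v, Q v ↔ w = v := fun v => by simp [h, hP]
    simp [hQ, hP]
  · have hQ : ∀ v, ¬ Q v := fun v => by simp [h, hP]
    simp [hQ, hP]

lemma cylMass_split_input (μ : (Fin n → X) → (Fin n → Y) → (Fin (n + 1) → S) → ℝ)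
    (t a b : ℕ) (ht : t < n) (xs : Fin n → X) (ys : Fin n → Y) (ss : Fin (n + 1) → S) :
    cylMass μ t a b xs ys ss =
      ∑ v : X, cylMass μ (t + 1) a b (Function.update xs ⟨t, ht⟩ v) ys ss := by
  unfold cylMass
  symm
  rw [Finset.sum_comm]
  refine Finset.sum_congr rfl fun xs' _ => ?_
  rw [Finset.sum_comm]
  refine Finset.sum_congr rfl fun ys' _ => ?_
  rw [Finset.sum_comm]
  refine Finset.sum_congr rfl fun ss' _ => ?_
  refine (ite_eq_sum_ite _ _ (xs' ⟨t, ht⟩) _ fun v => ?_).symm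
  rw [agree_succ_iff]
  tauto

lemma cylMass_split_output (μ : (Fin n → X) → (Fin n → Y) → (Fin (n + 1) → S) → ℝ)
    (t a b : ℕ) (ha : a < n) (xs : Fin n → X) (ys : Fin n → Y) (ss : Fin (n + 1) → S) :
    cylMass μ t a b xs ys ss =
      ∑ v : Y, cylMass μ t (a + 1) b xs (Function.update ys ⟨a, ha⟩ v) ss := by
  unfold cylMass
  symm
  rw [Finset.sum_comm]
  refine Finset.sum_congr rfl fun xs' _ => ?_
  rw [Finset.sum_comm]
  refine Finset.sum_congr rfl fun ys' _ => ?_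
  rw [Finset.sum_comm]
  refine Finset.sum_congr rfl fun ss' _ => ?_
  refine (ite_eq_sum_ite _ _ (ys' ⟨a, ha⟩) _ fun v => ?_).symm
  rw [agree_succ_iff]
  tauto

lemma cylMass_split_state (μ : (Fin n → X) → (Fin n → Y) → (Fin (n + 1) → S) → ℝ)
    (t a b : ℕ) (hb : b + 1 < n + 1) (xs : Fin n → X) (ys : Fin n → Y) (ss : Fin (n + 1) → S) :
    cylMass μ t a b xs ys ss =
      ∑ v : S, cylMass μ t a (b + 1) xs ys (Function.update ss ⟨b + 1, hb⟩ v) := by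
  unfold cylMass
  symm
  rw [Finset.sum_comm]
  refine Finset.sum_congr rfl fun xs' _ => ?_
  rw [Finset.sum_comm]
  refine Finset.sum_congr rfl fun ys' _ => ?_
  rw [Finset.sum_comm]
  refine Finset.sum_congr rfl fun ss' _ => ?_
  refine (ite_eq_sum_ite _ _ (ss' ⟨b + 1, hb⟩) _ fun v => ?_).symm
  rw [agree_le_succ_iff]
  tauto

/-- The cylinder that fixes every coordinate is a single trajectory. -/
lemma cylMass_full (μ : (Fin n → X) → (Fin n → Y) → (Fin (n + 1) → S) → ℝ)
    (xs : Fin n → X) (ys : Fin n → Y) (ss : Fin (n + 1) → S) :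
    cylMass μ n n n xs ys ss = μ xs ys ss := by
  unfold cylMass
  have h : ∀ (xs' : Fin n → X) (ys' : Fin n → Y) (ss' : Fin (n + 1) → S),
      ((∀ i : Fin n, i.val < n → xs' i = xs i) ∧
        (∀ i : Fin n, i.val < n → ys' i = ys i) ∧
        (∀ i : Fin (n + 1), i.val ≤ n → ss' i = ss i)) ↔ (xs' = xs ∧ ys' = ys ∧ ss' = ss) := by
    intro xs' ys' ss'
    simp only [funext_iff]
    refine and_congr ?_ (and_congr ?_ ?_)
    · exact forall_congr' fun i => by simp [i.isLt]
    · exact forall_congr' fun i => by simp [i.isLt]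
    · exact forall_congr' fun i => by simp [Nat.lt_succ_iff.mp i.isLt]
  simp_rw [h]
  simp [ite_and]

/-- The closed formula for cylinder masses. The hypothesis `t - d ≤ a` says that all outputs seen
by the first `t` encoder kernels are fixed by the cylinder. The induction is on the number of
free coordinates. -/
lemma mass_eq (d : ℕ) (hd : 1 ≤ d) (μ₀ : S → ℝ) (W : S → Y → X → S → ℝ)
    (hWsum : ∀ (xv : X) (σ : S), ∑ σ' : S, ∑ yv : Y, W σ' yv xv σ = 1)
    (e : (t : Fin n) → (Fin t.val → X) → (Fin (t.val + 1 - d) → Y) → X → ℝ)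
    (hesum : ∀ t hx hy, ∑ xv : X, e t hx hy xv = 1)
    (μ : (Fin n → X) → (Fin n → Y) → (Fin (n + 1) → S) → ℝ)
    (hμ : ∀ xs ys ss, μ xs ys ss =
      μ₀ (ss 0) * (encProd d e n xs ys * chanProd W n xs ys ss))
    (t a : ℕ) (h1 : t - d ≤ a) (h2 : a ≤ t) (h3 : t ≤ n)
    (xs : Fin n → X) (ys : Fin n → Y) (ss : Fin (n + 1) → S) :
    cylMass μ t a a xs ys ss = μ₀ (ss 0) * (encProd d e t xs ys * chanProd W a xs ys ss) := by
  induction hm : (n - t) + (n - a) generalizing t a xs ys ss with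
  | zero =>
    have ht : t = n := by omega
    have ha : a = n := by omega
    subst ht ha
    rw [cylMass_full, hμ]
  | succ m ih =>
    rcases h2.lt_or_eq with h | h
    · have ha : a < n := by omega
      rw [cylMass_split_output μ t a a ha]
      simp_rw [cylMass_split_state μ t (a + 1) a (Nat.succ_lt_succ ha)]
      have key : ∀ (y : Y) (σ : S), cylMass μ t (a + 1) (a + 1) xs (Function.update ys ⟨a, ha⟩ y)
          (Function.update ss ⟨a + 1, Nat.succ_lt_succ ha⟩ σ) =
          μ₀ (ss 0) * (encProd d e t xs ys * chanProd W a xs ys ss) *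
            W σ y (xs ⟨a, ha⟩) (ss ⟨a, ha.trans (Nat.lt_succ_self n)⟩) := by
        intro y σ
        rw [ih t (a + 1) (by omega) (by omega) h3 _ _ _ (by omega), chanProd_succ_update,
          update_of_val_ne _ _ _ _ _ (by simp),
          encProd_congr d e t xs xs (Function.update ys ⟨a, ha⟩ y) ys (fun _ _ => rfl)
            (fun i hi => update_of_val_ne _ _ _ _ _ (by omega))]
        ring
      simp_rw [key, ← Finset.mul_sum]
      rw [Finset.sum_comm, hWsum, mul_one]
    · subst h
      have ha : a < n := by omega
      rw [cylMass_split_input μ a a a ha]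
      have key : ∀ x : X, cylMass μ (a + 1) a a (Function.update xs ⟨a, ha⟩ x) ys ss =
          μ₀ (ss 0) * (encProd d e a xs ys * chanProd W a xs ys ss) *
            e ⟨a, ha⟩ (fun j => xs ⟨j.val, j.isLt.trans ha⟩)
              (fun j => ys ⟨j.val, by have h1 := j.isLt; simp only at h1; omega⟩) x := by
        intro x
        rw [ih (a + 1) a (by omega) (by omega) (by omega) _ _ _ (by omega), encProd_succ_update,
          chanProd_congr W a (Function.update xs ⟨a, ha⟩ x) xs ys ys ss ss
            (fun i hi => update_of_val_ne _ _ _ _ _ (by omega)) (fun _ _ => rfl)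
            (fun _ _ => rfl)]
        ring
      simp_rw [key, ← Finset.mul_sum]
      rw [hesum, mul_one]

end CylinderMass

/-- for a finite-state channel used with a delayed-feedback
encoder (delay `d`), the joint law `μ` of inputs, outputs and states satisfies,
for every time `t` with `d ≤ t ≤ n`:

(i) conditioned on `(X^t, Y^{t−d+1}, S^{t−d})` (an event of positive
probability), the state `S_{t−d+1}` has conditional law
`W(s_{t−d+1}, y_{t−d+1} | x_{t−d+1}, s_{t−d}) / Σ_{σ'} W(σ', y_{t−d+1} |
x_{t−d+1}, s_{t−d})`;

(ii) conditioned on `(X^t, Y^{t−d}, S^{t−d})` (an event of positive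
probability), the output `Y_{t−d+1}` has conditional law
`y ↦ Σ_{σ'} W(σ', y | x_{t−d+1}, s_{t−d})`.

Consequently the transformed process with state `S̃_{t−1} = (S_{t−d},
X_{t−d+1}^{t−1})`, output `Ỹ_t = Y_{t−d+1}` and input `X̃_t = X_t` satisfies the
finite-state-channel Markov property.

Indexing convention: `xs i` and `ys i` (for `i : Fin n`) are the input and the
output at time `i+1`, and `ss i` (for `i : Fin (n+1)`) is the state at time
`i`.  `W σ' yv xv σ = P(S⁺ = σ', Y = yv | X = xv, S = σ)` and
`e t hx hy xv` is the probability that the encoder emits `xv` at time `t+1`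
given the input history `hx` and the delayed output history `hy`. -/
theorem transformed_channel_markov_property
    {X Y S : Type*} [Fintype X] [Fintype Y] [Fintype S]
    [DecidableEq X] [DecidableEq Y] [DecidableEq S]
    [Nonempty X] [Nonempty Y] [Nonempty S]
    (n d : ℕ) (hd : 2 ≤ d) (hdn : d ≤ n)
    (μ₀ : S → ℝ) (hμ₀ : ∀ σ : S, 0 ≤ μ₀ σ) (hμ₀sum : ∑ σ : S, μ₀ σ = 1)
    (W : S → Y → X → S → ℝ)
    (hW : ∀ (σ' : S) (yv : Y) (xv : X) (σ : S), 0 ≤ W σ' yv xv σ)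
    (hWsum : ∀ (xv : X) (σ : S), ∑ σ' : S, ∑ yv : Y, W σ' yv xv σ = 1)
    (e : (t : Fin n) → (Fin t.val → X) → (Fin (t.val + 1 - d) → Y) → X → ℝ)
    (he : ∀ t hx hy xv, 0 ≤ e t hx hy xv)
    (hesum : ∀ t hx hy, ∑ xv : X, e t hx hy xv = 1)
    (μ : (Fin n → X) → (Fin n → Y) → (Fin (n + 1) → S) → ℝ)
    (hμ : ∀ xs ys ss, μ xs ys ss = μ₀ (ss 0) *
      ∏ t : Fin n,
        (e t (fun i => xs ⟨i.val, i.isLt.trans t.isLt⟩)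
            (fun j => ys ⟨j.val, by have h1 := j.isLt; have h2 := t.isLt; omega⟩)
            (xs t) *
          W (ss t.succ) (ys t) (xs t) (ss t.castSucc))) :
    ∀ (t : ℕ) (ht1 : d ≤ t) (ht2 : t ≤ n),
      ∀ (xs : Fin n → X) (ys : Fin n → Y) (ss : Fin (n + 1) → S),
        -- (i) conditional law of S_{t−d+1}
        ((0 < ∑ xs' : Fin n → X, ∑ ys' : Fin n → Y, ∑ ss' : Fin (n + 1) → S,
            (if (∀ i : Fin n, i.val < t → xs' i = xs i) ∧
                (∀ i : Fin n, i.val < t - d + 1 → ys' i = ys i) ∧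
                (∀ i : Fin (n + 1), i.val ≤ t - d → ss' i = ss i)
              then μ xs' ys' ss' else 0) →
          (∑ xs' : Fin n → X, ∑ ys' : Fin n → Y, ∑ ss' : Fin (n + 1) → S,
            (if (∀ i : Fin n, i.val < t → xs' i = xs i) ∧
                (∀ i : Fin n, i.val < t - d + 1 → ys' i = ys i) ∧
                (∀ i : Fin (n + 1), i.val ≤ t - d + 1 → ss' i = ss i)
              then μ xs' ys' ss' else 0)) /
          (∑ xs' : Fin n → X, ∑ ys' : Fin n → Y, ∑ ss' : Fin (n + 1) → S,
            (if (∀ i : Fin n, i.val < t → xs' i = xs i) ∧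
                (∀ i : Fin n, i.val < t - d + 1 → ys' i = ys i) ∧
                (∀ i : Fin (n + 1), i.val ≤ t - d → ss' i = ss i)
              then μ xs' ys' ss' else 0)) =
          W (ss ⟨t - d + 1, by omega⟩) (ys ⟨t - d, by omega⟩)
              (xs ⟨t - d, by omega⟩) (ss ⟨t - d, by omega⟩) /
            ∑ σ' : S, W σ' (ys ⟨t - d, by omega⟩)
              (xs ⟨t - d, by omega⟩) (ss ⟨t - d, by omega⟩)) ∧
        -- (ii) conditional law of Y_{t−d+1}
        (0 < ∑ xs' : Fin n → X, ∑ ys' : Fin n → Y, ∑ ss' : Fin (n + 1) → S,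
            (if (∀ i : Fin n, i.val < t → xs' i = xs i) ∧
                (∀ i : Fin n, i.val < t - d → ys' i = ys i) ∧
                (∀ i : Fin (n + 1), i.val ≤ t - d → ss' i = ss i)
              then μ xs' ys' ss' else 0) →
          ∀ yv : Y,
            (∑ xs' : Fin n → X, ∑ ys' : Fin n → Y, ∑ ss' : Fin (n + 1) → S,
              (if (∀ i : Fin n, i.val < t → xs' i = xs i) ∧
                  (∀ i : Fin n, i.val < t - d → ys' i = ys i) ∧
                  ys' ⟨t - d, by omega⟩ = yv ∧
                  (∀ i : Fin (n + 1), i.val ≤ t - d → ss' i = ss i)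
                then μ xs' ys' ss' else 0)) /
            (∑ xs' : Fin n → X, ∑ ys' : Fin n → Y, ∑ ss' : Fin (n + 1) → S,
              (if (∀ i : Fin n, i.val < t → xs' i = xs i) ∧
                  (∀ i : Fin n, i.val < t - d → ys' i = ys i) ∧
                  (∀ i : Fin (n + 1), i.val ≤ t - d → ss' i = ss i)
                then μ xs' ys' ss' else 0)) =
            ∑ σ' : S, W σ' yv (xs ⟨t - d, by omega⟩) (ss ⟨t - d, by omega⟩))) := by
  intro t ht1 ht2 xs ys ss
  have hμ' : ∀ xs ys ss, μ xs ys ss =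
      μ₀ (ss 0) * (encProd d e n xs ys * chanProd W n xs ys ss) := by
    intro xs ys ss
    rw [hμ, Finset.prod_mul_distrib]
    simp [encProd, chanProd]
  have hmass := mass_eq d (by omega) μ₀ W hWsum e hesum μ hμ' t
  obtain ⟨k, hk⟩ : ∃ k, k = t - d := ⟨_, rfl⟩
  have hkn : k < n := by omega
  set c : ℝ := μ₀ (ss 0) * (encProd d e t xs ys * chanProd W k xs ys ss) with hc
  have hext : ∀ (y : Y) (σ : S), cylMass μ t (k + 1) (k + 1) xs
      (Function.update ys ⟨k, hkn⟩ y) (Function.update ss ⟨k + 1, Nat.succ_lt_succ hkn⟩ σ) =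
      c * W σ y (xs ⟨k, hkn⟩) (ss ⟨k, hkn.trans (Nat.lt_succ_self n)⟩) := by
    intro y σ
    rw [hmass (k + 1) (by omega) (by omega) ht2, chanProd_succ_update,
      update_of_val_ne _ _ _ _ _ (by simp),
      encProd_congr d e t xs xs (Function.update ys ⟨k, hkn⟩ y) ys (fun _ _ => rfl)
        (fun i hi => update_of_val_ne _ _ _ _ _ (by omega)), hc]
    ring
  have hmarg : ∀ y : Y, cylMass μ t (k + 1) k xs (Function.update ys ⟨k, hkn⟩ y) ss =
      c * ∑ σ : S, W σ y (xs ⟨k, hkn⟩) (ss ⟨k, hkn.trans (Nat.lt_succ_self n)⟩) := by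
    intro y
    rw [cylMass_split_state μ t (k + 1) k (Nat.succ_lt_succ hkn), Finset.mul_sum]
    exact Finset.sum_congr rfl fun σ _ => hext y σ
  subst hk
  refine ⟨fun hpos => ?_, fun hpos yv => ?_⟩
  · have hnum := hext (ys ⟨t - d, hkn⟩) (ss ⟨t - d + 1, Nat.succ_lt_succ hkn⟩)
    have hden := hmarg (ys ⟨t - d, hkn⟩)
    rw [Function.update_eq_self] at hnum hden
    rw [Function.update_eq_self] at hnum
    change 0 < cylMass μ t (t - d + 1) (t - d) xs ys ss at hpos
    change cylMass μ t (t - d + 1) (t - d + 1) xs ys ss /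
      cylMass μ t (t - d + 1) (t - d) xs ys ss = _
    have hc0 : c ≠ 0 := by
      intro h0
      rw [hden, h0, zero_mul] at hpos
      exact lt_irrefl _ hpos
    rw [hnum, hden, mul_div_mul_left _ _ hc0]
  · have hden : cylMass μ t (t - d) (t - d) xs ys ss = c :=
      hmass (t - d) le_rfl (by omega) ht2 xs ys ss
    have hnum := hmarg yv
    unfold cylMass at hnum
    simp_rw [agree_succ_iff, and_assoc] at hnum
    change 0 < cylMass μ t (t - d) (t - d) xs ys ss at hpos
    change _ / cylMass μ t (t - d) (t - d) xs ys ss = _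
    rw [hden] at hpos ⊢
    rw [hnum, mul_div_cancel_left₀ _ hpos.ne']
end
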